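/- Let μ₁, μ₂, d > 0 and suppose √(μ₁ μ₂) · d > 2. Then the characteristic equation log(ν/μ₁) · log(ν/μ₂) = K₀(ν d)², for ν ∈ (0, ∞), describing the bound states of two point δ-interactions in ℝ² separated by distance d, has exactly two solutions ν > 0. -/

import Mathlib

open Real MeasureTheory Set

/-- The modified Bessel function of the third kind of order zero, via its integral
representation `K₀(x) = ∫₁^∞ e^{-x t}/√(t² - 1) dt`. -/
noncomputable def besselK0 (x : ℝ) : ℝ :=
  ∫ t in Ioi (1 : ℝ), Real.exp (-x * t) / Real.sqrt (t ^ 2 - 1)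

/-!
In the variable `u = log ν` the equation reads `(u - a) (u - b) = k(u)²` with `a = log μ₁`,
`b = log μ₂` and `k(u) = K₀(eᵘ d)`. The function `k` is positive and antitone, while `k(u) + u` is
strictly increasing because `x K₁(x) < 1`, where `K₁ = -K₀'`. As `k > 0`, there is no solution
between `a` and `b`.

Above `max a b` the left-hand side increases from `0` and `k²` decreases, so there is exactly one
solution. Below `min a b` the equation is `√((a - u) (b - u)) + u = k(u) + u`, whose left-hand side
is antitone with limit `(a + b) / 2` at `-∞`. Hence there is exactly one solution as soon as
`k(u) + u < (a + b) / 2` for some `u`, that is, `K₀(x) + log x < log (√(μ₁ μ₂) d)` for some `x > 0`.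
The bound `K₀(x) ≤ π / (2 e x)` at `x = π / (2 e)` provides this when `√(μ₁ μ₂) d > π / 2`.
-/

open Filter Topology

section Kernels

variable {t : ℝ}

lemma sqrt_sq_sub_one_pos (ht : 1 < t) : 0 < √(t ^ 2 - 1) :=
  sqrt_pos.2 (by nlinarith)

lemma sqrt_sq_sub_one_lt (ht : 0 < t) : √(t ^ 2 - 1) < t :=
  (sqrt_lt' ht).2 (by linarith)

lemma hasDerivAt_sqrt_sq_sub_one (ht : 1 < t) :
    HasDerivAt (fun t => √(t ^ 2 - 1)) (t / √(t ^ 2 - 1)) t := by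
  have h : HasDerivAt (fun t : ℝ => t ^ 2 - 1) (2 * t) t := by
    simpa using (hasDerivAt_pow 2 t).sub_const 1
  convert h.sqrt (by nlinarith) using 1
  field_simp

lemma tendsto_sqrt_sq_sub_one_sub_atTop :
    Tendsto (fun t : ℝ => √(t ^ 2 - 1) - t) atTop (𝓝 0) := by
  have hinv : Tendsto (fun t : ℝ => -t⁻¹) atTop (𝓝 0) := by
    simpa using (tendsto_inv_atTop_zero (𝕜 := ℝ)).neg
  refine tendsto_of_tendsto_of_tendsto_of_le_of_le' hinv tendsto_const_nhds ?_ ?_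
  · filter_upwards [eventually_ge_atTop 1] with t ht
    have ht₀ : 0 < t := by linarith
    have h : t - t⁻¹ ≤ √(t ^ 2 - 1) := by
      refine le_sqrt_of_sq_le ?_
      have hinv : t⁻¹ ≤ 1 := inv_le_one_of_one_le₀ ht
      calc (t - t⁻¹) ^ 2 = t ^ 2 - 1 + (t⁻¹ ^ 2 - 1) := by field_simp; ring
        _ ≤ t ^ 2 - 1 := by nlinarith [inv_pos.2 ht₀]
    linarith
  · filter_upwards [eventually_gt_atTop 0] with t ht
    linarith [sqrt_sq_sub_one_lt ht]

lemma hasDerivAt_sqrt_sq_sub_one_sub (ht : 1 < t) :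
    HasDerivAt (fun t => √(t ^ 2 - 1) - t) (t / √(t ^ 2 - 1) - 1) t :=
  (hasDerivAt_sqrt_sq_sub_one ht).sub (hasDerivAt_id t)

lemma div_sqrt_sq_sub_one_sub_one_nonneg (ht : 1 < t) : 0 ≤ t / √(t ^ 2 - 1) - 1 :=
  sub_nonneg.2 <| (one_le_div (sqrt_sq_sub_one_pos ht)).2 (sqrt_sq_sub_one_lt (by linarith)).le

lemma integrableOn_div_sqrt_sq_sub_one_sub_one :
    IntegrableOn (fun t : ℝ => t / √(t ^ 2 - 1) - 1) (Ioi 1) :=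
  integrableOn_Ioi_deriv_of_nonneg (by fun_prop) (fun _ => hasDerivAt_sqrt_sq_sub_one_sub)
    (fun _ => div_sqrt_sq_sub_one_sub_one_nonneg) tendsto_sqrt_sq_sub_one_sub_atTop

lemma integral_div_sqrt_sq_sub_one_sub_one :
    ∫ t in Ioi (1 : ℝ), (t / √(t ^ 2 - 1) - 1) = 1 := by
  rw [integral_Ioi_of_hasDerivAt_of_nonneg (by fun_prop) (fun _ => hasDerivAt_sqrt_sq_sub_one_sub)
    (fun _ => div_sqrt_sq_sub_one_sub_one_nonneg) tendsto_sqrt_sq_sub_one_sub_atTop]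
  simp

lemma hasDerivAt_arctan_sqrt_sq_sub_one (ht : 1 < t) :
    HasDerivAt (fun t => arctan √(t ^ 2 - 1)) (1 / (t * √(t ^ 2 - 1))) t := by
  convert (hasDerivAt_sqrt_sq_sub_one ht).arctan using 1
  rw [sq_sqrt (by nlinarith)]
  field_simp
  ring

lemma tendsto_arctan_sqrt_sq_sub_one_atTop :
    Tendsto (fun t : ℝ => arctan √(t ^ 2 - 1)) atTop (𝓝 (π / 2)) :=
  (tendsto_nhds_of_tendsto_nhdsWithin tendsto_arctan_atTop).comp <|
    tendsto_sqrt_atTop.comp <| tendsto_atTop_add_const_right _ _ <| tendsto_pow_atTop two_ne_zero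

lemma one_div_mul_sqrt_sq_sub_one_nonneg (ht : 1 < t) : 0 ≤ 1 / (t * √(t ^ 2 - 1)) := by
  positivity

lemma integrableOn_one_div_mul_sqrt_sq_sub_one :
    IntegrableOn (fun t : ℝ => 1 / (t * √(t ^ 2 - 1))) (Ioi 1) :=
  integrableOn_Ioi_deriv_of_nonneg (by fun_prop) (fun _ => hasDerivAt_arctan_sqrt_sq_sub_one)
    (fun _ => one_div_mul_sqrt_sq_sub_one_nonneg) tendsto_arctan_sqrt_sq_sub_one_atTop

lemma integral_one_div_mul_sqrt_sq_sub_one :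
    ∫ t in Ioi (1 : ℝ), 1 / (t * √(t ^ 2 - 1)) = π / 2 := by
  rw [integral_Ioi_of_hasDerivAt_of_nonneg (by fun_prop)
    (fun _ => hasDerivAt_arctan_sqrt_sq_sub_one) (fun _ => one_div_mul_sqrt_sq_sub_one_nonneg)
    tendsto_arctan_sqrt_sq_sub_one_atTop]
  simp

end Kernels

section Bessel

/-- The modified Bessel function of the third kind of order one, via the integral
representation `K₁(x) = ∫₁^∞ t e^{-x t}/√(t² - 1) dt`, so that `K₀' = -K₁` on `(0, ∞)`. -/
noncomputable def besselK1 (x : ℝ) : ℝ :=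
  ∫ t in Ioi (1 : ℝ), t * exp (-x * t) / √(t ^ 2 - 1)

variable {x : ℝ}

lemma exp_neg_mul_div_sqrt_le (hx : 0 < x) {t : ℝ} (ht : 1 < t) :
    exp (-x * t) / √(t ^ 2 - 1) ≤ exp (-1) / x * (1 / (t * √(t ^ 2 - 1))) := by
  have hs := sqrt_sq_sub_one_pos ht
  have h : x * t * exp (-x * t) ≤ exp (-1) := by
    simpa using mul_exp_neg_le_exp_neg_one (x * t)
  calc exp (-x * t) / √(t ^ 2 - 1)
      = x * t * exp (-x * t) / (x * (t * √(t ^ 2 - 1))) := by field_simp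
    _ ≤ exp (-1) / (x * (t * √(t ^ 2 - 1))) := by gcongr
    _ = exp (-1) / x * (1 / (t * √(t ^ 2 - 1))) := by field_simp

lemma integrableOn_besselK0 (hx : 0 < x) :
    IntegrableOn (fun t => exp (-x * t) / √(t ^ 2 - 1)) (Ioi 1) := by
  refine (integrableOn_one_div_mul_sqrt_sq_sub_one.const_mul (exp (-1) / x)).mono'
    (Measurable.aestronglyMeasurable (by fun_prop)) ?_
  filter_upwards [ae_restrict_mem measurableSet_Ioi] with t ht
  rw [norm_of_nonneg (by positivity)]
  exact exp_neg_mul_div_sqrt_le hx ht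

lemma besselK0_le_pi_div (hx : 0 < x) : besselK0 x ≤ π / (2 * exp 1 * x) :=
  calc besselK0 x ≤ ∫ t in Ioi (1 : ℝ), exp (-1) / x * (1 / (t * √(t ^ 2 - 1))) :=
        setIntegral_mono_on (integrableOn_besselK0 hx)
          (integrableOn_one_div_mul_sqrt_sq_sub_one.const_mul _) measurableSet_Ioi
          fun _ => exp_neg_mul_div_sqrt_le hx
    _ = π / (2 * exp 1 * x) := by
        rw [integral_const_mul, integral_one_div_mul_sqrt_sq_sub_one, exp_neg]
        field_simp

lemma besselK0_add_log_le_log_pi_div_two :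
    besselK0 (π / (2 * exp 1)) + log (π / (2 * exp 1)) ≤ log (π / 2) := by
  have hK : besselK0 (π / (2 * exp 1)) ≤ 1 := by
    refine (besselK0_le_pi_div (by positivity)).trans_eq ?_
    field_simp
  rw [← div_div] at hK ⊢
  rw [log_div (by positivity) (exp_ne_zero 1), log_exp]
  linarith

lemma besselK0_pos (hx : 0 < x) : 0 < besselK0 x := by
  have hsupp : Ioi 1 ⊆ Function.support fun t => exp (-x * t) / √(t ^ 2 - 1) := fun _ ht =>
    (div_pos (exp_pos _) (sqrt_sq_sub_one_pos ht)).ne'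
  rw [besselK0, setIntegral_pos_iff_support_of_nonneg_ae
    (Eventually.of_forall fun t => by dsimp; positivity) (integrableOn_besselK0 hx),
    inter_eq_right.2 hsupp]
  simp

lemma antitoneOn_besselK0 : AntitoneOn besselK0 (Ioi 0) := fun x hx y hy hxy =>
  setIntegral_mono_on (integrableOn_besselK0 hy) (integrableOn_besselK0 hx) measurableSet_Ioi
    fun t ht => by
      have : 0 < t := one_pos.trans ht
      gcongr

-- In `t = √(t² - 1) + (t - √(t² - 1))`, the bound `e^{-xt} ≤ e^{-x}` is spent on the second term.
lemma mul_exp_neg_mul_div_sqrt_le (hx : 0 ≤ x) {t : ℝ} (ht : 1 < t) :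
    t * exp (-x * t) / √(t ^ 2 - 1) ≤ exp (-x * t) + exp (-x) * (t / √(t ^ 2 - 1) - 1) := by
  have hexp : exp (-x * t) ≤ exp (-x) := exp_le_exp.2 (by nlinarith)
  calc t * exp (-x * t) / √(t ^ 2 - 1)
      = exp (-x * t) + exp (-x * t) * (t / √(t ^ 2 - 1) - 1) := by ring
    _ ≤ exp (-x * t) + exp (-x) * (t / √(t ^ 2 - 1) - 1) := by
        gcongr
        exact div_sqrt_sq_sub_one_sub_one_nonneg ht

lemma integrableOn_besselK1_majorant (hx : 0 < x) :
    IntegrableOn (fun t => exp (-x * t) + exp (-x) * (t / √(t ^ 2 - 1) - 1)) (Ioi 1) :=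
  (integrableOn_exp_mul_Ioi (neg_neg_of_pos hx) 1).add
    (integrableOn_div_sqrt_sq_sub_one_sub_one.const_mul _)

lemma integrableOn_besselK1 (hx : 0 < x) :
    IntegrableOn (fun t => t * exp (-x * t) / √(t ^ 2 - 1)) (Ioi 1) := by
  refine (integrableOn_besselK1_majorant hx).mono'
    (Measurable.aestronglyMeasurable (by fun_prop)) ?_
  filter_upwards [ae_restrict_mem measurableSet_Ioi] with t (ht : 1 < t)
  rw [norm_of_nonneg (by positivity)]
  exact mul_exp_neg_mul_div_sqrt_le hx.le ht

lemma mul_besselK1_le (hx : 0 < x) : x * besselK1 x ≤ (x + 1) * exp (-x) := by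
  have h : besselK1 x ≤ exp (-x) / x + exp (-x) :=
    calc besselK1 x
        ≤ ∫ t in Ioi (1 : ℝ), (exp (-x * t) + exp (-x) * (t / √(t ^ 2 - 1) - 1)) :=
          setIntegral_mono_on (integrableOn_besselK1 hx) (integrableOn_besselK1_majorant hx)
            measurableSet_Ioi fun _ => mul_exp_neg_mul_div_sqrt_le hx.le
      _ = exp (-x) / x + exp (-x) := by
          rw [integral_add (integrableOn_exp_mul_Ioi (neg_neg_of_pos hx) 1)
            (integrableOn_div_sqrt_sq_sub_one_sub_one.const_mul _), integral_const_mul,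
            integral_div_sqrt_sq_sub_one_sub_one, integral_exp_mul_Ioi (neg_neg_of_pos hx)]
          simp
  calc x * besselK1 x ≤ x * (exp (-x) / x + exp (-x)) := by gcongr
    _ = (x + 1) * exp (-x) := by field_simp; ring

lemma mul_besselK1_lt_one (hx : 0 < x) : x * besselK1 x < 1 :=
  calc x * besselK1 x ≤ (x + 1) * exp (-x) := mul_besselK1_le hx
    _ < exp x * exp (-x) := by gcongr; exact add_one_lt_exp hx.ne'
    _ = 1 := by rw [← exp_add, add_neg_cancel, exp_zero]

lemma hasDerivAt_besselK0 (hx : 0 < x) : HasDerivAt besselK0 (-besselK1 x) x := by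
  have hderiv : ∀ y t : ℝ, HasDerivAt (fun y => exp (-y * t) / √(t ^ 2 - 1))
      (-(t * exp (-y * t) / √(t ^ 2 - 1))) y := fun y t => by
    have h : HasDerivAt (fun y => -y * t) (-t) y := by
      simpa using (hasDerivAt_neg y).mul_const t
    exact (h.exp.div_const _).congr_deriv (by ring)
  have hbound : ∀ t ∈ Ioi (1 : ℝ), ∀ y ∈ Ioi (x / 2),
      ‖-(t * exp (-y * t) / √(t ^ 2 - 1))‖ ≤ t * exp (-(x / 2) * t) / √(t ^ 2 - 1) := by
    intro t ht y (hy : x / 2 < y)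
    have ht₀ : 0 < t := one_pos.trans ht
    rw [norm_neg, norm_of_nonneg (by positivity)]
    gcongr
  have h := (hasDerivAt_integral_of_dominated_loc_of_deriv_le
    (F := fun y t => exp (-y * t) / √(t ^ 2 - 1)) (Ioi_mem_nhds (half_lt_self hx))
    (Eventually.of_forall fun y => Measurable.aestronglyMeasurable (by fun_prop))
    (integrableOn_besselK0 hx) (Measurable.aestronglyMeasurable (by fun_prop))
    (ae_restrict_of_forall_mem measurableSet_Ioi hbound) (integrableOn_besselK1 (half_pos hx))
    (Eventually.of_forall fun t y _ => hderiv y t)).2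
  rwa [integral_neg] at h

lemma strictMonoOn_besselK0_add_log : StrictMonoOn (fun x => besselK0 x + log x) (Ioi 0) := by
  have hderiv : ∀ x > 0, HasDerivAt (fun x => besselK0 x + log x) (-besselK1 x + x⁻¹) x :=
    fun x hx => (hasDerivAt_besselK0 hx).add (hasDerivAt_log hx.ne')
  refine strictMonoOn_of_deriv_pos (convex_Ioi 0)
    (fun x hx => (hderiv x hx).continuousAt.continuousWithinAt) fun x hx => ?_
  rw [interior_Ioi] at hx
  have hK : besselK1 x < x⁻¹ := by
    rw [← one_div, lt_div_iff₀' hx]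
    exact mul_besselK1_lt_one hx
  rw [(hderiv x hx).deriv]
  linarith

end Bessel

section CharacteristicEquation

lemma sqrt_mul_add_le_sqrt_add_mul_add {p q w : ℝ} (hp : 0 ≤ p) (hq : 0 ≤ q) (hw : 0 ≤ w) :
    √(p * q) + w ≤ √((p + w) * (q + w)) := by
  have amgm : 2 * √(p * q) ≤ p + q := by
    rw [sqrt_mul hp]
    nlinarith [two_mul_le_add_sq √p √q, sq_sqrt hp, sq_sqrt hq]
  refine le_sqrt_of_sq_le ?_
  calc (√(p * q) + w) ^ 2 = p * q + w * (2 * √(p * q)) + w ^ 2 := by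
        rw [add_sq, sq_sqrt (mul_nonneg hp hq)]; ring
    _ ≤ p * q + w * (p + q) + w ^ 2 := by gcongr
    _ = (p + w) * (q + w) := by ring

lemma antitoneOn_sqrt_sub_mul_sub_add {a b : ℝ} (hab : a ≤ b) :
    AntitoneOn (fun u => √((a - u) * (b - u)) + u) (Iic a) := fun u _ v (hv : v ≤ a) huv => by
  have h := sqrt_mul_add_le_sqrt_add_mul_add (sub_nonneg.2 hv) (sub_nonneg.2 (hv.trans hab))
    (sub_nonneg.2 huv)
  simp only [sub_add_sub_cancel] at h
  linarith

lemma eventually_lt_sqrt_sub_mul_sub_add {a b c : ℝ} (hc : c < (a + b) / 2) :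
    ∀ᶠ u in atBot, c < √((a - u) * (b - u)) + u := by
  filter_upwards [eventually_lt_atBot ((a * b - c ^ 2) / (a + b - 2 * c))] with u hu
  rw [lt_div_iff₀ (by linarith)] at hu
  rw [← sub_lt_iff_lt_add]
  exact lt_sqrt_of_sq_lt (by linarith)

lemma continuous_of_antitone_of_monotone_add_id {k : ℝ → ℝ} (hanti : Antitone k)
    (hmono : Monotone fun u => k u + u) : Continuous k := by
  refine (LipschitzWith.of_le_add fun u v => ?_).continuous
  rw [dist_eq]
  rcases le_total u v with huv | hvu
  · have : k u + u ≤ k v + v := hmono huv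
    linarith [neg_abs_le (u - v)]
  · linarith [hanti hvu, abs_nonneg (u - v)]

variable {k : ℝ → ℝ} {a b : ℝ}

lemma existsUnique_lt_sub_mul_sub_eq_sq (hab : a ≤ b) (hpos : ∀ u, 0 < k u) (hcont : Continuous k)
    (hmono : StrictMono fun u => k u + u) {w : ℝ} (hw : k w + w < (a + b) / 2) :
    ∃! u, u < a ∧ (u - a) * (u - b) = k u ^ 2 := by
  set f : ℝ → ℝ := fun u => √((a - u) * (b - u)) - k u with hf
  have hzero : ∀ u, f u = 0 ↔ (u - a) * (u - b) = k u ^ 2 := fun u => by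
    rw [hf, sub_eq_zero, sqrt_eq_iff_mul_self_eq_of_pos (hpos u), ← sq, eq_comm, ← neg_sub u a,
      ← neg_sub u b, neg_mul_neg]
  have hanti : StrictAntiOn f (Iic a) := fun u hu v hv huv => by
    have h₁ := antitoneOn_sqrt_sub_mul_sub_add hab hu hv huv.le
    have h₂ := hmono huv
    simp only [hf] at h₁ h₂ ⊢
    linarith
  obtain ⟨z, hfz, hza⟩ : ∃ z, 0 < f z ∧ z < a := by
    obtain ⟨z, hz, hza, hzw⟩ := ((eventually_lt_sqrt_sub_mul_sub_add hw).and
      ((eventually_lt_atBot a).and (eventually_le_atBot w))).exists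
    have : k z + z ≤ k w + w := hmono.monotone hzw
    exact ⟨z, by simp only [hf]; linarith, hza⟩
  have hfa : f a < 0 := by simpa [hf] using hpos a
  obtain ⟨u, hu, hfu⟩ := intermediate_value_Ioo' hza.le (by fun_prop) ⟨hfa, hfz⟩
  refine ⟨u, ⟨hu.2, (hzero u).1 hfu⟩, fun v ⟨hva, hv⟩ => ?_⟩
  exact hanti.injOn hva.le hu.2.le (((hzero v).2 hv).trans hfu.symm)

lemma existsUnique_gt_sub_mul_sub_eq_sq (hab : a ≤ b) (hpos : ∀ u, 0 < k u) (hcont : Continuous k)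
    (hanti : Antitone k) : ∃! u, b < u ∧ (u - a) * (u - b) = k u ^ 2 := by
  set f : ℝ → ℝ := fun u => (u - a) * (u - b) - k u ^ 2 with hf
  have hmono : StrictMonoOn f (Ici b) := fun u (hu : b ≤ u) v _ huv => by
    have hk : k v ^ 2 ≤ k u ^ 2 := pow_le_pow_left₀ (hpos v).le (hanti huv.le) 2
    have hprod : (u - a) * (u - b) < (v - a) * (v - b) := by nlinarith
    simp only [hf]
    linarith
  have hfb : f b < 0 := by simpa [hf] using pow_pos (hpos b) 2
  have hfc : 0 ≤ f (b + k b) := by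
    have hk : k (b + k b) ^ 2 ≤ k b ^ 2 :=
      pow_le_pow_left₀ (hpos _).le (hanti (by linarith [hpos b])) 2
    have : 0 ≤ (b - a) * k b := mul_nonneg (sub_nonneg.2 hab) (hpos b).le
    simp only [hf]
    linarith
  obtain ⟨u, hu, hfu⟩ := intermediate_value_Ioc (by linarith [hpos b]) (by fun_prop) ⟨hfb, hfc⟩
  refine ⟨u, ⟨hu.1, sub_eq_zero.1 hfu⟩, fun v ⟨hbv, hv⟩ => ?_⟩
  exact hmono.injOn hbv.le hu.1.le ((sub_eq_zero.2 hv).trans hfu.symm)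

lemma lt_or_lt_of_sub_mul_sub_pos {u : ℝ} (h : 0 < (u - a) * (u - b)) : u < a ∨ b < u := by
  by_contra! hu
  nlinarith [mul_nonneg (sub_nonneg.2 hu.1) (sub_nonneg.2 hu.2)]

lemma ncard_sub_mul_sub_eq_sq (hpos : ∀ u, 0 < k u) (hanti : Antitone k)
    (hmono : StrictMono fun u => k u + u) {w : ℝ} (hw : k w + w < (a + b) / 2) :
    {u | (u - a) * (u - b) = k u ^ 2}.ncard = 2 := by
  wlog hab : a ≤ b generalizing a b
  · simp only [mul_comm (_ - a)]
    exact this (by rwa [add_comm b]) (le_of_not_ge hab)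
  have hcont := continuous_of_antitone_of_monotone_add_id hanti hmono.monotone
  obtain ⟨u₁, ⟨hu₁a, hu₁⟩, huniq₁⟩ := existsUnique_lt_sub_mul_sub_eq_sq hab hpos hcont hmono hw
  obtain ⟨u₂, ⟨hbu₂, hu₂⟩, huniq₂⟩ := existsUnique_gt_sub_mul_sub_eq_sq hab hpos hcont hanti
  refine ncard_eq_two.2 ⟨u₁, u₂, by linarith, ?_⟩
  ext u
  refine ⟨fun (hu : _ = _) => ?_, by rintro (rfl | rfl) <;> assumption⟩
  rcases lt_or_lt_of_sub_mul_sub_pos (hu ▸ pow_pos (hpos u) 2) with hua | hbu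
  · exact Or.inl (huniq₁ u ⟨hua, hu⟩)
  · exact Or.inr (huniq₂ u ⟨hbu, hu⟩)

lemma setOf_pos_and_eq_image_exp (p : ℝ → Prop) :
    {ν | 0 < ν ∧ p ν} = exp '' {u | p (exp u)} := by
  ext ν
  constructor
  · rintro ⟨hν, hp⟩
    exact ⟨log ν, by simpa only [mem_ofPred_eq, exp_log hν], exp_log hν⟩
  · rintro ⟨u, hu, rfl⟩
    exact ⟨exp_pos u, hu⟩

end CharacteristicEquation

theorem two_delta_bound_states_R2_general {μ₁ μ₂ d x : ℝ} (hμ₁ : 0 < μ₁) (hμ₂ : 0 < μ₂)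
    (hd : 0 < d) (hx : 0 < x) (h : besselK0 x + log x < log (√(μ₁ * μ₂) * d)) :
    {ν : ℝ | 0 < ν ∧ log (ν / μ₁) * log (ν / μ₂) = besselK0 (ν * d) ^ 2}.ncard = 2 := by
  have hexp : ∀ u, 0 < exp u * d := fun u => by positivity
  have hscale : StrictMono fun u => exp u * d := exp_strictMono.mul_const hd
  have hmono : StrictMono fun u => besselK0 (exp u * d) + u := fun u v huv => by
    have := strictMonoOn_besselK0_add_log (hexp u) (hexp v) (hscale huv)
    simp only [log_mul (exp_ne_zero _) hd.ne', log_exp] at this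
    linarith
  have hthreshold : besselK0 (exp (log (x / d)) * d) + log (x / d) < (log μ₁ + log μ₂) / 2 := by
    rw [log_mul (by positivity) hd.ne', log_sqrt (by positivity), log_mul hμ₁.ne' hμ₂.ne'] at h
    rw [exp_log (by positivity), div_mul_cancel₀ _ hd.ne', log_div hx.ne' hd.ne']
    linarith
  rw [setOf_pos_and_eq_image_exp, ncard_image_of_injective _ exp_injective]
  simp only [log_div (exp_ne_zero _) hμ₁.ne', log_div (exp_ne_zero _) hμ₂.ne', log_exp]
  exact ncard_sub_mul_sub_eq_sq (fun u => besselK0_pos (hexp u))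
    (fun u v huv => antitoneOn_besselK0 (hexp u) (hexp v) (hscale.monotone huv)) hmono hthreshold

/-- Number of bound states of two point δ-interactions in ℝ²: for `μ₁, μ₂, d > 0` with
`√(μ₁ μ₂) d > 2`, the characteristic equation `log(ν/μ₁) log(ν/μ₂) = K₀(ν d)²`
on `(0, ∞)` has exactly two solutions. -/
theorem two_delta_bound_states_R2 (μ₁ μ₂ d : ℝ) (hμ₁ : 0 < μ₁) (hμ₂ : 0 < μ₂) (hd : 0 < d)
    (h : Real.sqrt (μ₁ * μ₂) * d > 2) :
    {ν : ℝ | 0 < ν ∧ Real.log (ν / μ₁) * Real.log (ν / μ₂) = besselK0 (ν * d) ^ 2}.ncard = 2 :=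
  two_delta_bound_states_R2_general hμ₁ hμ₂ hd (by positivity) <|
    besselK0_add_log_le_log_pi_div_two.trans_lt <|
      log_lt_log (by positivity) (by linarith [pi_lt_four])
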